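/- arXiv:1205.6980 — 3 statements merged into one kernel-verified Lean document; each statement's English description precedes it below -/
import Mathlib

section
/- Let δ ∈ ℤ and let λ be a partition. Then P_λ(δ) ≠ 0 if and only if deg_δ(λ) = deg_δ(∅), i.e. if and only if λ is δ-regular. -/
open Polynomial

/-- A partition: a weakly decreasing, finitely supported sequence of naturals λ_1, λ_2, …. -/
structure Ptn where
  toFun : ℕ+ → ℕ
  antitone' : ∀ i j : ℕ+, i ≤ j → toFun j ≤ toFun i
  finite_support' : ∃ N : ℕ+, ∀ i : ℕ+, N ≤ i → toFun i = 0

namespace Ptn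

/-- The transpose partition: λ^T_i = #{k ≥ 1 : λ_k ≥ i}. -/
noncomputable def transpose (p : Ptn) (i : ℕ+) : ℕ :=
  Set.ncard {k : ℕ+ | (i : ℕ) ≤ p.toFun k}

/-- The empty partition. -/
def empty : Ptn where
  toFun := fun _ => 0
  antitone' := fun _ _ _ => le_refl 0
  finite_support' := ⟨1, fun _ _ => rfl⟩

end Ptn

/-- e_δ(λ)_i = λ^T_i − δ/2 − i + 1. -/
noncomputable def ed (δ : ℤ) (p : Ptn) (i : ℕ+) : ℚ :=
  (p.transpose i : ℚ) - (δ : ℚ) / 2 - ((i : ℕ) : ℚ) + 1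

/-- The δ-degree of singularity: #{(i,j) : 1 ≤ i < j, e_δ(λ)_i + e_δ(λ)_j = 0}. -/
noncomputable def degd (δ : ℤ) (p : Ptn) : ℕ :=
  Set.ncard {q : ℕ+ × ℕ+ | q.1 < q.2 ∧ ed δ p q.1 + ed δ p q.2 = 0}

/-- The vertex set L: nonnegative integers if δ is even, {1/2, 3/2, …} if δ is odd. -/
def Lset (δ : ℤ) : Set ℚ :=
  {n : ℚ | 0 ≤ n ∧ ∃ k : ℤ, n + (δ : ℚ) / 2 = (k : ℚ)}

/-- Vertex n is labelled ∘ in x_λ: no entry of e_δ(λ) has absolute value n. -/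
def IsCirc (δ : ℤ) (p : Ptn) (n : ℚ) : Prop := ∀ i : ℕ+, |ed δ p i| ≠ n

/-- Vertex n is labelled × in x_λ: n > 0 and both n and −n occur as entries. -/
def IsTimes (δ : ℤ) (p : Ptn) (n : ℚ) : Prop :=
  0 < n ∧ (∃ i : ℕ+, ed δ p i = n) ∧ (∃ i : ℕ+, ed δ p i = -n)

/-- Vertex n is labelled ∧ in x_λ: n > 0, n occurs as an entry and −n does not. -/
def IsUp (δ : ℤ) (p : Ptn) (n : ℚ) : Prop :=
  0 < n ∧ (∃ i : ℕ+, ed δ p i = n) ∧ ¬ (∃ i : ℕ+, ed δ p i = -n)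

/-- Vertex n is labelled ∨ in x_λ: n > 0, −n occurs and n does not, or n = 0 and 0 occurs. -/
def IsDown (δ : ℤ) (p : Ptn) (n : ℚ) : Prop :=
  (0 < n ∧ (∃ i : ℕ+, ed δ p i = -n) ∧ ¬ (∃ i : ℕ+, ed δ p i = n)) ∨
  (n = 0 ∧ ∃ i : ℕ+, ed δ p i = 0)

/-- q is obtained from p by adding one box, in row k. -/
def AddBoxAt (p q : Ptn) (k : ℕ+) : Prop :=
  q.toFun k = p.toFun k + 1 ∧ ∀ t : ℕ+, t ≠ k → q.toFun t = p.toFun t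

/-- q is obtained from p by removing one box, from row l. -/
def RemoveBoxAt (p q : Ptn) (l : ℕ+) : Prop :=
  q.toFun l + 1 = p.toFun l ∧ ∀ t : ℕ+, t ≠ l → q.toFun t = p.toFun t

/-- A box is addable to p at position (k,i): λ_k + 1 = i and increasing the k-th part
yields a partition. -/
def AddableAt (p : Ptn) (k i : ℕ+) : Prop :=
  p.toFun k + 1 = (i : ℕ) ∧ ∃ q : Ptn, AddBoxAt p q k

/-- A box is removable from p at position (l,j): λ_l = j and decreasing the l-th part
yields a partition. -/
def RemovableAt (p : Ptn) (l j : ℕ+) : Prop :=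
  p.toFun l = (j : ℕ) ∧ ∃ q : Ptn, RemoveBoxAt p q l

/-- Edge of the Young graph: q is obtained from p by adding or removing a single box. -/
def YoungEdge (p q : Ptn) : Prop := (∃ k, AddBoxAt p q k) ∨ (∃ k, AddBoxAt q p k)

/-- d(i,j) = λ_i + λ_j − i − j + 1 if i ≤ j, and −λ^T_i − λ^T_j + i + j − 1 if i > j. -/
noncomputable def dbox (p : Ptn) (i j : ℕ+) : ℤ :=
  if (i : ℕ) ≤ (j : ℕ) then
    (p.toFun i : ℤ) + (p.toFun j : ℤ) - ((i : ℕ) : ℤ) - ((j : ℕ) : ℤ) + 1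
  else
    -(p.transpose i : ℤ) - (p.transpose j : ℤ) + ((i : ℕ) : ℤ) + ((j : ℕ) : ℤ) - 1

/-- Hook length h(i,j) = λ_i − j + λ^T_j − i + 1. -/
noncomputable def hook (p : Ptn) (i j : ℕ+) : ℤ :=
  (p.toFun i : ℤ) - ((j : ℕ) : ℤ) + (p.transpose j : ℤ) - ((i : ℕ) : ℤ) + 1

/-- The King polynomial P_λ(u) = ∏_{(i,j)∈[λ]} (u − 1 + d(i,j)) / h(i,j) ∈ ℚ[u]. -/
noncomputable def king (p : Ptn) : Polynomial ℚ :=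
  ∏ᶠ (q : ℕ+ × ℕ+) (_ : (q.2 : ℕ) ≤ p.toFun q.1),
    Polynomial.C ((hook p q.1 q.2 : ℚ))⁻¹ *
      (Polynomial.X + Polynomial.C ((dbox p q.1 q.2 : ℚ) - 1))

/-- (ρ_δ)_i = −δ/2 − i + 1. -/
def rhod (δ : ℤ) (i : ℕ+) : ℚ := -(δ : ℚ) / 2 - ((i : ℕ) : ℚ) + 1

/-- A sequence is dominant if it is strictly decreasing. -/
def Dominant (x : ℕ+ → ℚ) : Prop := ∀ i j : ℕ+, i < j → x j < x i

/-- ε_i: the sequence with 1 in position i and 0 elsewhere. -/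
def eps (i : ℕ+) : ℕ+ → ℚ := fun j => if j = i then 1 else 0

/-- Two sequences are adjacent if they differ by ±ε_i for some i. -/
def AdjacentSeq (x y : ℕ+ → ℚ) : Prop := ∃ i : ℕ+, y = x + eps i ∨ y = x - eps i

/-- x lies in the connected component of ρ_δ in the dominant part of the lattice graph:
x is dominant and is joined to ρ_δ by a finite chain of pairwise adjacent dominant
sequences. -/
def InComponent (δ : ℤ) (x : ℕ+ → ℚ) : Prop :=
  Dominant x ∧ ∃ (r : ℕ) (c : ℕ → ℕ+ → ℚ),
    c 0 = rhod δ ∧ c r = x ∧ (∀ t ≤ r, Dominant (c t)) ∧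
    ∀ t < r, AdjacentSeq (c t) (c (t + 1))

/-- λ ∈ A_δ: λ is joined to ∅ in the Young graph by a chain of δ-regular partitions. -/
def InAdelta (δ : ℤ) (p : Ptn) : Prop :=
  ∃ (r : ℕ) (c : ℕ → Ptn), c 0 = Ptn.empty ∧ c r = p ∧
    (∀ t ≤ r, degd δ (c t) = degd δ Ptn.empty) ∧
    ∀ t < r, YoungEdge (c t) (c (t + 1))

/-!
Mark the integers `λ_i - i` as beads; by conjugation, the remaining integers, the gaps, are
`j - 1 - λ^T_j`. Put `m = -δ`. The factor of `P_λ` at a box `(i, j)` vanishes at `δ` iff the beads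
`i ≤ j`, respectively the gaps `j < i`, add up to `m`, while `deg_δ(λ)` counts the pairs of distinct
gaps with sum `m`. Whether a pair of beads or gaps comes from a box of `λ` can be read off from the
excess of beads over gaps in the window strictly between its two members.

The reflection `x ↦ m - x` preserves such a window, so its excess is the number of its beads
reflected to beads minus the number of its gaps reflected to gaps. For `m ≥ 0` this shows that
`P_λ(δ) = 0` iff some two beads, possibly equal, have sum `m`, and for `m < 0` iff some two distinct
gaps have sum `m`. Large windows have excess `-m - 1` whatever `λ` is, so pairs of beads and pairs
of gaps are created together: for `m ≥ 0` the empty partition has no pair of beads, for `m < 0` no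
pair of gaps, and in both cases the degree exceeds that of `∅` exactly when `P_λ(δ) = 0`.
-/

open Finset Filter

section Excess

variable {α : Type*} {A : Set α} [DecidablePred (· ∈ A)] {f : α → α} {I J : Finset α}

variable (A I) in
/-- The surplus of elements of `A` over non-elements of `A` in the finite set `I`; for `A` the beads
of a partition and `I` a symmetric window, it decides which boxes give a zero of the King
polynomial. -/
def excess : ℤ := #{x ∈ I | x ∈ A} - #{x ∈ I | x ∉ A}

theorem excess_eq_two_mul_card_filter_mem_sub_card :
    excess A I = 2 * #{x ∈ I | x ∈ A} - #I := by
  have := card_filter_add_card_filter_not (s := I) (· ∈ A)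
  unfold excess
  omega

theorem excess_eq_card_sub_two_mul_card_filter_notMem :
    excess A I = #I - 2 * #{x ∈ I | x ∉ A} := by
  have := card_filter_add_card_filter_not (s := I) (· ∈ A)
  unfold excess
  omega

/-- The orbits of `f` with one element in `A` and one outside cancel. -/
theorem excess_eq_card_sub_card_of_involutive (hf : f.Involutive) (hI : Set.MapsTo f I I) :
    excess A I = #{x ∈ I | x ∈ A ∧ f x ∈ A} - #{x ∈ I | x ∉ A ∧ f x ∉ A} := by
  have hmixed : #{x ∈ I | x ∈ A ∧ f x ∉ A} = #{x ∈ I | x ∉ A ∧ f x ∈ A} := by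
    refine card_nbij' f f ?_ ?_ (fun x _ ↦ hf x) (fun x _ ↦ hf x)
    all_goals
      intro x hx
      simp only [coe_filter, Set.mem_ofPred_eq, hf x] at hx ⊢
      exact ⟨hI hx.1, hx.2.2, hx.2.1⟩
  have hmem := card_filter_add_card_filter_not (s := {x ∈ I | x ∈ A}) (f · ∈ A)
  have hnotMem := card_filter_add_card_filter_not (s := {x ∈ I | x ∉ A}) (f · ∈ A)
  simp only [filter_filter] at hmem hnotMem
  unfold excess
  omega

theorem excess_nonpos (hf : f.Involutive) (hI : Set.MapsTo f I I)
    (h : ∀ x ∈ I, x ∈ A → f x ∉ A) : excess A I ≤ 0 := by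
  have hpairs : #{x ∈ I | x ∈ A ∧ f x ∈ A} = 0 :=
    card_eq_zero.2 (filter_eq_empty_iff.2 fun x hx hxA ↦ h x hx hxA.1 hxA.2)
  rw [excess_eq_card_sub_card_of_involutive hf hI]
  omega

theorem excess_lt_excess_of_subset (hf : f.Involutive) (hI : Set.MapsTo f I I)
    (hJ : Set.MapsTo f J J) (hJI : J ⊆ I) (h : ∀ x ∈ I, x ∉ J → x ∈ A → f x ∉ A)
    {x : α} (hxI : x ∈ I) (hxJ : x ∉ J) (hx : x ∉ A) (hfx : f x ∉ A) :
    excess A I < excess A J := by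
  have hmem : #{x ∈ I | x ∈ A ∧ f x ∈ A} ≤ #{x ∈ J | x ∈ A ∧ f x ∈ A} := by
    refine card_le_card fun z hz ↦ ?_
    rw [mem_filter] at hz ⊢
    exact ⟨by_contra fun hzJ ↦ h z hz.1 hzJ hz.2.1 hz.2.2, hz.2⟩
  have hnotMem : #{x ∈ J | x ∉ A ∧ f x ∉ A} < #{x ∈ I | x ∉ A ∧ f x ∉ A} :=
    card_lt_card <| (ssubset_iff_of_subset (filter_subset_filter _ hJI)).2
      ⟨x, mem_filter.2 ⟨hxI, hx, hfx⟩, fun hx' ↦ hxJ (mem_filter.1 hx').1⟩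
  rw [excess_eq_card_sub_card_of_involutive hf hI, excess_eq_card_sub_card_of_involutive hf hJ]
  omega

end Excess

section Reflection

variable {A : Set ℤ} [DecidablePred (· ∈ A)] {m x y : ℤ}

theorem involutive_sub_left (m : ℤ) : Function.Involutive (m - ·) :=
  sub_sub_cancel m

theorem mapsTo_sub_left_Ioo (m x : ℤ) :
    Set.MapsTo (m - ·) (Ioo (m - x) x : Finset ℤ) (Ioo (m - x) x : Finset ℤ) := by
  intro z hz
  simp only [coe_Ioo, Set.mem_Ioo] at hz ⊢
  omega

theorem excess_Ioo_nonpos (h : ∀ z, m ≤ 2 * z → z < x → z ∈ A → m - z ∉ A) :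
    excess A (Ioo (m - x) x) ≤ 0 := by
  refine excess_nonpos (involutive_sub_left m) (mapsTo_sub_left_Ioo m x) fun z hz hzA hzA' ↦ ?_
  rw [mem_Ioo] at hz
  rcases le_total m (2 * z) with hmz | hmz
  · exact h z hmz hz.2 hzA hzA'
  · exact h (m - z) (by omega) (by omega) hzA' (by rwa [sub_sub_cancel])

theorem excess_Ioo_lt_excess_Ioo (hmx : m < 2 * x) (hxy : x < y) (hx : x ∉ A) (hx' : m - x ∉ A)
    (h : ∀ z, x < z → z < y → z ∈ A → m - z ∉ A) :
    excess A (Ioo (m - y) y) < excess A (Ioo (m - x) x) := by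
  refine excess_lt_excess_of_subset (involutive_sub_left m) (mapsTo_sub_left_Ioo m y)
    (mapsTo_sub_left_Ioo m x) (Ioo_subset_Ioo (by omega) hxy.le) (fun z hzy hzx hz hz' ↦ ?_)
    (mem_Ioo.2 ⟨by omega, hxy⟩) (fun hxx ↦ (mem_Ioo.1 hxx).2.false) hx hx'
  have hne : z ≠ x := ne_of_mem_of_not_mem hz hx
  have hne' : z ≠ m - x := ne_of_mem_of_not_mem hz hx'
  rw [mem_Ioo] at hzy hzx
  rcases le_total z x with hle | hle
  · exact h (m - z) (by omega) (by omega) hz' (by rwa [sub_sub_cancel])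
  · exact h z (by omega) hzy.2 hz hz'

theorem exists_notMem_pair_of_excess_lt_neg_one (h : excess A (Ioo (m - x) x) < -1) :
    ∃ z, m < 2 * z ∧ z ∉ A ∧ m - z ∉ A := by
  rw [excess_eq_card_sub_card_of_involutive (involutive_sub_left m) (mapsTo_sub_left_Ioo m x)] at h
  obtain ⟨z, hz, w, hw, hne⟩ :=
    one_lt_card.1 (show 1 < #{z ∈ Ioo (m - x) x | z ∉ A ∧ m - z ∉ A} by omega)
  obtain ⟨z, hmz, hz, hz'⟩ : ∃ z, 2 * z ≠ m ∧ z ∉ A ∧ m - z ∉ A := by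
    by_cases hmz : 2 * z = m
    · exact ⟨w, by omega, (mem_filter.1 hw).2⟩
    · exact ⟨z, hmz, (mem_filter.1 hz).2⟩
  rcases lt_or_gt_of_ne hmz with hlt | hlt
  · exact ⟨m - z, by omega, hz', by rwa [sub_sub_cancel]⟩
  · exact ⟨z, hlt, hz, hz'⟩

theorem card_filter_notMem_pair :
    #{z ∈ Ioo (m - x) x | z ∉ A ∧ m - z ∉ A} =
      2 * #{z ∈ Ioo (m - x) x | m < 2 * z ∧ z ∉ A ∧ m - z ∉ A} +
        #{z ∈ Ioo (m - x) x | 2 * z = m ∧ z ∉ A} := by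
  have hreflect : #{z ∈ Ioo (m - x) x | 2 * z < m ∧ z ∉ A ∧ m - z ∉ A} =
      #{z ∈ Ioo (m - x) x | m < 2 * z ∧ z ∉ A ∧ m - z ∉ A} := by
    refine card_nbij' (m - ·) (m - ·) ?_ ?_ (fun z _ ↦ sub_sub_cancel m z)
      (fun z _ ↦ sub_sub_cancel m z)
    all_goals
      intro z hz
      simp only [coe_filter, mem_Ioo, Set.mem_ofPred_eq, sub_sub_cancel] at hz ⊢
      exact ⟨by omega, by omega, hz.2.2.2, hz.2.2.1⟩
  have hmid : #{z ∈ Ioo (m - x) x | 2 * z = m ∧ z ∉ A} =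
      #{z ∈ Ioo (m - x) x | 2 * z = m ∧ z ∉ A ∧ m - z ∉ A} := by
    congr 1
    refine filter_congr fun z _ ↦ and_congr_right fun hz ↦ ?_
    rw [show m - z = z by omega, and_self]
  rw [hmid, two_mul]
  nth_rw 1 [← hreflect]
  simp only [card_filter, ← sum_add_distrib]
  refine sum_congr rfl fun z _ ↦ ?_
  grind

end Reflection

namespace Ptn

variable (p : Ptn)

section Transpose

theorem finite_setOf_le_toFun (j : ℕ+) : {k : ℕ+ | (j : ℕ) ≤ p.toFun k}.Finite := by
  obtain ⟨N, hN⟩ := p.finite_support'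
  refine (Set.finite_Iio N).subset fun k hk ↦ Set.mem_Iio.2 (lt_of_not_ge fun hNk ↦ ?_)
  have : (j : ℕ) ≤ 0 := hN k hNk ▸ hk
  exact this.not_gt j.pos

theorem le_toFun_iff_le_transpose {i j : ℕ+} :
    (j : ℕ) ≤ p.toFun i ↔ (i : ℕ) ≤ p.transpose j := by
  have hcard : (Set.Iic i).ncard = i := by
    rw [← Set.Icc_bot, ← coe_Icc, Set.ncard_coe_finset, PNat.card_Icc]
    simp
  constructor
  · intro h
    rw [← hcard]
    exact Set.ncard_le_ncard (fun k hk ↦ h.trans (p.antitone' k i hk)) (p.finite_setOf_le_toFun j)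
  · contrapose!
    intro h
    rw [← hcard]
    refine Set.ncard_lt_ncard ⟨fun k hk ↦ ?_, fun hle ↦ h.not_ge (hle Set.self_mem_Iic)⟩
    exact le_of_not_ge fun hik ↦ h.not_ge (le_trans hk (p.antitone' i k hik))

theorem transpose_antitone : Antitone p.transpose := fun i j hij ↦
  Set.ncard_le_ncard (fun _ hk ↦ le_trans (PNat.coe_le_coe i j |>.2 hij) hk)
    (p.finite_setOf_le_toFun i)

theorem finite_boxes : {q : ℕ+ × ℕ+ | (q.2 : ℕ) ≤ p.toFun q.1}.Finite := by
  refine ((p.finite_setOf_le_toFun 1).prod (Set.finite_Iic (p.toFun 1).succPNat)).subset ?_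
  rintro ⟨i, j⟩ (hij : (j : ℕ) ≤ p.toFun i)
  refine ⟨le_trans j.pos hij, PNat.coe_le_coe _ _ |>.1 ?_⟩
  exact (hij.trans (p.antitone' 1 i one_le)).trans (Nat.le_succ _)

end Transpose

theorem king_eval_eq_zero_iff (u : ℚ) :
    (king p).eval u = 0 ↔
      ∃ i j : ℕ+, (j : ℕ) ≤ p.toFun i ∧ u + ((dbox p i j : ℚ) - 1) = 0 := by
  have hking : king p = ∏ q ∈ p.finite_boxes.toFinset,
      C (hook p q.1 q.2 : ℚ)⁻¹ * (X + C ((dbox p q.1 q.2 : ℚ) - 1)) := by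
    rw [← finprod_mem_eq_finite_toFinset_prod]
    rfl
  have hhook {i j : ℕ+} (hij : (j : ℕ) ≤ p.toFun i) : (hook p i j : ℚ) ≠ 0 := by
    have := p.le_toFun_iff_le_transpose.1 hij
    rw [Int.cast_ne_zero, hook]
    omega
  simp only [hking, eval_prod, prod_eq_zero_iff, Set.Finite.mem_toFinset, Set.mem_ofPred_eq,
    Prod.exists, eval_mul, eval_add, eval_C, eval_X]
  refine exists_congr fun i ↦ exists_congr fun j ↦ and_congr_right fun hij ↦ ?_
  rw [mul_eq_zero_iff_left (inv_ne_zero (hhook hij))]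

section Maya

/-- The position `λ_i - i` of the `i`-th bead in the Maya diagram of a partition: `d(i, j) - 1` is a
sum of two bead positions for `i ≤ j`. -/
def bead (i : ℕ+) : ℤ := p.toFun i - (i : ℕ)

/-- The position `j - 1 - λ^T_j` of the `j`-th gap in the Maya diagram of a partition: `d(i, j) - 1`
is a sum of two gap positions for `j < i`, and the gaps are the entries of `-e_δ(λ)` translated by
`-δ / 2`. -/
noncomputable def gap (j : ℕ+) : ℤ := (j : ℕ) - 1 - p.transpose j

/-- The Maya diagram of a partition, as the set of positions of its beads. -/
def beads : Set ℤ := Set.range p.bead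

noncomputable instance : DecidablePred (· ∈ p.beads) := Classical.decPred _

theorem bead_strictAnti : StrictAnti p.bead := by
  intro i j hij
  have := p.antitone' i j hij.le
  have := PNat.coe_lt_coe i j |>.2 hij
  unfold bead
  omega

theorem gap_strictMono : StrictMono p.gap := by
  intro i j hij
  have := p.transpose_antitone hij.le
  have := PNat.coe_lt_coe i j |>.2 hij
  unfold gap
  omega

theorem gap_notMem_beads (j : ℕ+) : p.gap j ∉ p.beads := by
  rintro ⟨i, hi⟩
  have := p.le_toFun_iff_le_transpose (i := i) (j := j)
  unfold bead gap at hi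
  omega

theorem exists_bead_le (x : ℤ) : ∃ i, p.bead i ≤ x := by
  obtain ⟨N, hN⟩ := p.finite_support'
  refine ⟨N + x.natAbs.succPNat, ?_⟩
  rw [bead, hN _ (PNat.lt_add_right _ _).le]
  simp only [PNat.add_coe, Nat.succPNat_coe]
  omega

theorem exists_gap_eq {x : ℤ} (hx : x ∉ p.beads) : ∃ j, p.gap j = x := by
  -- `i` is the first bead to the left of `x`; the gap at `x` lies in column `x + i`.
  obtain ⟨i, hi, hmin⟩ : ∃ i, p.bead i ≤ x ∧ ∀ k < i, ¬ p.bead k ≤ x :=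
    ⟨PNat.find (p.exists_bead_le x), PNat.find_spec (p.exists_bead_le x),
      fun _ ↦ PNat.find_min (p.exists_bead_le x)⟩
  have hlt : p.bead i < x := hi.lt_of_ne fun h ↦ hx ⟨i, h⟩
  obtain ⟨j, hj⟩ : ∃ j : ℕ+, ((j : ℕ) : ℤ) = x + (i : ℕ) := by
    unfold bead at hlt
    lift x + (i : ℕ) to ℕ using by omega with n hn
    exact ⟨⟨n, by omega⟩, rfl⟩
  have hupper : p.transpose j < i := by
    have := p.le_toFun_iff_le_transpose (i := i) (j := j)
    unfold bead at hlt
    omega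
  have hlower : (i : ℕ) ≤ p.transpose j + 1 := by
    by_cases hi1 : i = 1
    · simp [hi1]
    · obtain ⟨k, rfl⟩ := PNat.exists_eq_succ_of_ne_one hi1
      have hk := hmin k (PNat.lt_add_right k 1)
      have := p.le_toFun_iff_le_transpose (i := k) (j := j)
      unfold bead at hk
      simp only [PNat.add_coe, PNat.one_coe] at hj ⊢
      omega
  refine ⟨j, ?_⟩
  unfold gap
  omega

theorem mem_beads_empty {x : ℤ} : x ∈ empty.beads ↔ x < 0 := by
  constructor
  · rintro ⟨i, rfl⟩
    have := i.pos
    simp only [bead, empty]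
    omega
  · intro hx
    refine ⟨⟨x.natAbs, by omega⟩, ?_⟩
    simp only [bead, empty, PNat.mk_coe]
    omega

theorem card_filter_mem_beads {I : Finset ℤ} {s : Finset ℕ+} (h : ∀ k, p.bead k ∈ I ↔ k ∈ s) :
    #{x ∈ I | x ∈ p.beads} = #s := by
  refine (card_nbij p.bead (fun k hk ↦ ?_) p.bead_strictAnti.injective.injOn fun x hx ↦ ?_).symm
  · exact mem_coe.2 (mem_filter.2 ⟨(h k).2 hk, k, rfl⟩)
  · obtain ⟨hxI, k, rfl⟩ := mem_filter.1 (mem_coe.1 hx)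
    exact ⟨k, (h k).1 hxI, rfl⟩

theorem card_filter_notMem_beads {I : Finset ℤ} {s : Finset ℕ+} (h : ∀ k, p.gap k ∈ I ↔ k ∈ s) :
    #{x ∈ I | x ∉ p.beads} = #s := by
  refine (card_nbij p.gap (fun k hk ↦ ?_) p.gap_strictMono.injective.injOn fun x hx ↦ ?_).symm
  · exact mem_coe.2 (mem_filter.2 ⟨(h k).2 hk, p.gap_notMem_beads k⟩)
  · obtain ⟨hxI, hxA⟩ := mem_filter.1 (mem_coe.1 hx)
    obtain ⟨k, rfl⟩ := p.exists_gap_eq hxA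
    exact ⟨k, (h k).1 hxI, rfl⟩

theorem excess_beads_Ioo_bead {i j : ℕ+} (hij : i < j) :
    excess p.beads (Ioo (p.bead j) (p.bead i)) =
      p.bead i + p.bead j + 2 * ((j : ℕ) - p.toFun i) - 1 := by
  have hcard : #{x ∈ Ioo (p.bead j) (p.bead i) | x ∈ p.beads} = #(Ioo i j) :=
    p.card_filter_mem_beads fun k ↦ by
      simp only [mem_Ioo, p.bead_strictAnti.lt_iff_gt, and_comm]
  have := p.bead_strictAnti hij
  have := PNat.coe_lt_coe i j |>.2 hij
  rw [excess_eq_two_mul_card_filter_mem_sub_card, hcard, PNat.card_Ioo, Int.card_Ioo]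
  unfold bead at *
  omega

theorem excess_beads_Ioo_gap {i j : ℕ+} (hji : j < i) :
    excess p.beads (Ioo (p.gap j) (p.gap i)) =
      p.gap i + p.gap j + 2 * (p.transpose j - (i : ℕ)) + 3 := by
  have hcard : #{x ∈ Ioo (p.gap j) (p.gap i) | x ∉ p.beads} = #(Ioo j i) :=
    p.card_filter_notMem_beads fun k ↦ by
      simp only [mem_Ioo, p.gap_strictMono.lt_iff_lt]
  have := p.gap_strictMono hji
  have := PNat.coe_lt_coe j i |>.2 hji
  rw [excess_eq_card_sub_two_mul_card_filter_notMem, hcard, PNat.card_Ioo, Int.card_Ioo]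
  unfold gap at *
  omega

theorem eventually_excess_beads_Ioo (m : ℤ) :
    ∀ᶠ y in atTop, excess p.beads (Ioo (m - y) y) = -m - 1 := by
  obtain ⟨N, hN⟩ := p.finite_support'
  filter_upwards [eventually_gt_atTop (p.bead 1), eventually_ge_atTop (m + (N : ℕ)),
    eventually_gt_atTop m, eventually_ge_atTop 0] with y hy hyN hym hy0
  obtain ⟨n, hn⟩ : ∃ n : ℕ+, ((n : ℕ) : ℤ) = y - m :=
    ⟨⟨(y - m).toNat, by omega⟩, by rw [PNat.mk_coe]; omega⟩
  have hbead : p.bead n = m - y := by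
    rw [bead, hN n (PNat.coe_le_coe N n |>.1 (by omega))]
    omega
  have hcard : #{x ∈ Ioo (m - y) y | x ∈ p.beads} = #(Iio n) :=
    p.card_filter_mem_beads fun k ↦ by
      have := p.bead_strictAnti.antitone (one_le : 1 ≤ k)
      rw [← hbead, mem_Ioo, mem_Iio, p.bead_strictAnti.lt_iff_gt]
      exact and_iff_left (by omega)
  rw [excess_eq_two_mul_card_filter_mem_sub_card, hcard, ← Ico_bot, PNat.card_Ico, Int.card_Ioo,
    PNat.bot_eq_one, PNat.one_coe]
  have := n.pos
  omega

end Maya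

section Zeros

variable {p} {m : ℤ}

variable (p m) in
/-- Some box of the partition has `d(i, j) - 1 = m`, so that its factor in the King polynomial
vanishes at `-m`. -/
def HasVanishingBox : Prop := ∃ i j : ℕ+, (j : ℕ) ≤ p.toFun i ∧ dbox p i j - 1 = m

theorem dbox_sub_one_of_le {i j : ℕ+} (hij : i ≤ j) : dbox p i j - 1 = p.bead i + p.bead j := by
  rw [dbox, if_pos (PNat.coe_le_coe i j |>.2 hij), bead, bead]
  ring

theorem dbox_sub_one_of_gt {i j : ℕ+} (hji : j < i) : dbox p i j - 1 = p.gap i + p.gap j := by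
  rw [dbox, if_neg (PNat.coe_lt_coe j i |>.2 hji).not_ge, gap, gap]
  ring

theorem hasVanishingBox_of_excess_le {x : ℤ} (hmx : m < 2 * x) (hx : x ∈ p.beads)
    (hx' : m - x ∈ p.beads) (hexc : excess p.beads (Ioo (m - x) x) ≤ m) :
    p.HasVanishingBox m := by
  obtain ⟨i, rfl⟩ := hx
  obtain ⟨j, hj⟩ := hx'
  have hij : i < j := p.bead_strictAnti.lt_iff_gt.1 (by omega)
  rw [← hj, p.excess_beads_Ioo_bead hij] at hexc
  exact ⟨i, j, by omega, by rw [dbox_sub_one_of_le hij.le]; omega⟩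

theorem hasVanishingBox_of_lt_excess {x : ℤ} (hmx : m < 2 * x) (hx : x ∉ p.beads)
    (hx' : m - x ∉ p.beads) (hexc : m + 1 < excess p.beads (Ioo (m - x) x)) :
    p.HasVanishingBox m := by
  obtain ⟨i, rfl⟩ := p.exists_gap_eq hx
  obtain ⟨j, hj⟩ := p.exists_gap_eq hx'
  have hji : j < i := p.gap_strictMono.lt_iff_lt.1 (by omega)
  rw [← hj, p.excess_beads_Ioo_gap hji] at hexc
  exact ⟨i, j, p.le_toFun_iff_le_transpose.2 (by omega), by rw [dbox_sub_one_of_gt hji]; omega⟩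

/-- The innermost pair of beads satisfies the excess bound, since no pair of beads lies inside. -/
theorem hasVanishingBox_of_exists_mem_pair (hm : 0 ≤ m)
    (h : ∃ x ∈ p.beads, m - x ∈ p.beads) : p.HasVanishingBox m := by
  obtain ⟨x, hmx, hx, hx'⟩ : ∃ x, m ≤ 2 * x ∧ x ∈ p.beads ∧ m - x ∈ p.beads := by
    obtain ⟨x, hx, hx'⟩ := h
    rcases le_total m (2 * x) with hmx | hmx
    · exact ⟨x, hmx, hx, hx'⟩
    · exact ⟨m - x, by omega, hx', by rwa [sub_sub_cancel]⟩
  obtain ⟨x, ⟨hmx, hx, hx'⟩, hmin⟩ := Int.exists_least_of_bdd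
    (P := fun x ↦ m ≤ 2 * x ∧ x ∈ p.beads ∧ m - x ∈ p.beads) ⟨0, fun z hz ↦ by omega⟩
    ⟨x, hmx, hx, hx'⟩
  rcases hmx.eq_or_lt with hmid | hlt
  · obtain ⟨i, rfl⟩ := hx
    refine ⟨i, i, ?_, by rw [dbox_sub_one_of_le le_rfl]; omega⟩
    unfold bead at hmid
    omega
  · refine hasVanishingBox_of_excess_le hlt hx hx' (le_trans (excess_Ioo_nonpos ?_) hm)
    exact fun z hmz hzx hz hz' ↦ hzx.not_ge (hmin z ⟨hmz, hz, hz'⟩)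

theorem HasVanishingBox.exists_mem_pair (hm : 0 ≤ m) (h : p.HasVanishingBox m) :
    ∃ x ∈ p.beads, m - x ∈ p.beads := by
  obtain ⟨i, j, hij, hm'⟩ := h
  rcases le_or_gt i j with hle | hlt
  · rw [dbox_sub_one_of_le hle] at hm'
    exact ⟨p.bead i, ⟨i, rfl⟩, j, by omega⟩
  · rw [dbox_sub_one_of_gt hlt] at hm'
    have hexc := p.excess_beads_Ioo_gap hlt
    have := p.le_toFun_iff_le_transpose.1 hij
    rw [show p.gap j = m - p.gap i by omega] at hexc
    by_contra! hno
    have := excess_Ioo_nonpos (m := m) (x := p.gap i) fun z _ _ ↦ hno z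
    omega

/-- If the box of the given pair of gaps lies outside the partition, the window inside this pair has
excess at most `m + 1`. As the excess eventually returns to `-m - 1 > m`, there are pairs of beads
further out, and the innermost of these has its box inside the partition. -/
theorem hasVanishingBox_of_exists_notMem_pair (hm : m < 0)
    (h : ∃ x, m < 2 * x ∧ x ∉ p.beads ∧ m - x ∉ p.beads) : p.HasVanishingBox m := by
  obtain ⟨x, hmx, hx, hx'⟩ := h
  by_cases hexc : m + 1 < excess p.beads (Ioo (m - x) x)
  · exact hasVanishingBox_of_lt_excess hmx hx hx' hexc
  obtain ⟨y, hxy, hy, hy'⟩ : ∃ y, x < y ∧ y ∈ p.beads ∧ m - y ∈ p.beads := by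
    by_contra! hno
    obtain ⟨y, hy, hxy⟩ :=
      ((p.eventually_excess_beads_Ioo m).and (eventually_gt_atTop x)).exists
    have := excess_Ioo_lt_excess_Ioo hmx hxy hx hx' fun z hxz _ ↦ hno z hxz
    omega
  obtain ⟨y, ⟨hxy, hy, hy'⟩, hmin⟩ := Int.exists_least_of_bdd
    (P := fun y ↦ x < y ∧ y ∈ p.beads ∧ m - y ∈ p.beads) ⟨x, fun z hz ↦ hz.1.le⟩
    ⟨y, hxy, hy, hy'⟩
  have := excess_Ioo_lt_excess_Ioo hmx hxy hx hx' fun z hxz hzy hz hz' ↦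
    hzy.not_ge (hmin z ⟨hxz, hz, hz'⟩)
  exact hasVanishingBox_of_excess_le (by omega) hy hy' (by omega)

theorem HasVanishingBox.exists_notMem_pair (hm : m < 0) (h : p.HasVanishingBox m) :
    ∃ x, m < 2 * x ∧ x ∉ p.beads ∧ m - x ∉ p.beads := by
  obtain ⟨i, j, hij, hm'⟩ := h
  rcases lt_trichotomy i j with hlt | rfl | hlt
  · rw [dbox_sub_one_of_le hlt.le] at hm'
    have hexc := p.excess_beads_Ioo_bead hlt
    rw [show p.bead j = m - p.bead i by omega] at hexc
    exact exists_notMem_pair_of_excess_lt_neg_one (x := p.bead i) (by omega)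
  · rw [dbox_sub_one_of_le le_rfl] at hm'
    unfold bead at hm'
    omega
  · rw [dbox_sub_one_of_gt hlt] at hm'
    have := p.gap_strictMono hlt
    refine ⟨p.gap i, by omega, p.gap_notMem_beads i, ?_⟩
    rw [show m - p.gap i = p.gap j by omega]
    exact p.gap_notMem_beads j

theorem hasVanishingBox_iff_of_nonneg (hm : 0 ≤ m) :
    p.HasVanishingBox m ↔ ∃ x ∈ p.beads, m - x ∈ p.beads :=
  ⟨HasVanishingBox.exists_mem_pair hm, hasVanishingBox_of_exists_mem_pair hm⟩

theorem hasVanishingBox_iff_of_neg (hm : m < 0) :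
    p.HasVanishingBox m ↔ ∃ x, m < 2 * x ∧ x ∉ p.beads ∧ m - x ∉ p.beads :=
  ⟨HasVanishingBox.exists_notMem_pair hm, hasVanishingBox_of_exists_notMem_pair hm⟩

theorem king_eval_eq_zero_iff_hasVanishingBox {δ : ℤ} :
    (king p).eval (δ : ℚ) = 0 ↔ p.HasVanishingBox (-δ) := by
  rw [king_eval_eq_zero_iff, HasVanishingBox]
  refine exists_congr fun i ↦ exists_congr fun j ↦ and_congr_right fun _ ↦ ?_
  rw [eq_neg_iff_add_eq_zero, add_comm]
  exact_mod_cast Iff.rfl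

end Zeros

section Degree

theorem ed_add_ed_eq_zero_iff {δ : ℤ} {i j : ℕ+} :
    ed δ p i + ed δ p j = 0 ↔ p.gap i + p.gap j = -δ := by
  have : ed δ p i + ed δ p j = (-δ - (p.gap i + p.gap j) : ℤ) := by
    unfold ed gap
    push_cast
    ring
  rw [this, Int.cast_eq_zero, sub_eq_zero, eq_comm]

theorem degd_eq_ncard (δ : ℤ) :
    degd δ p = {x : ℤ | -δ < 2 * x ∧ x ∉ p.beads ∧ -δ - x ∉ p.beads}.ncard := by
  refine Set.ncard_congr (fun q _ ↦ p.gap q.2) ?_ ?_ ?_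
  · rintro ⟨i, j⟩ ⟨hij, hsum⟩
    replace hsum : p.gap i + p.gap j = -δ := p.ed_add_ed_eq_zero_iff.1 hsum
    have : p.gap i < p.gap j := p.gap_strictMono hij
    refine ⟨show -δ < 2 * p.gap j by omega, p.gap_notMem_beads j, ?_⟩
    rw [show -δ - p.gap j = p.gap i by omega]
    exact p.gap_notMem_beads i
  · rintro ⟨i, j⟩ ⟨i', j'⟩ ⟨_, hsum⟩ ⟨_, hsum'⟩ (hgap : p.gap j = p.gap j')
    replace hsum : p.gap i + p.gap j = -δ := p.ed_add_ed_eq_zero_iff.1 hsum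
    replace hsum' : p.gap i' + p.gap j' = -δ := p.ed_add_ed_eq_zero_iff.1 hsum'
    rw [p.gap_strictMono.injective hgap,
      p.gap_strictMono.injective (show p.gap i = p.gap i' by omega)]
  · rintro x ⟨hx, hgap, hgap'⟩
    obtain ⟨j, rfl⟩ := p.exists_gap_eq hgap
    obtain ⟨i, hi⟩ := p.exists_gap_eq hgap'
    have hsum : p.gap i + p.gap j = -δ := by omega
    refine ⟨(i, j), ⟨p.gap_strictMono.lt_iff_lt.1 (show p.gap i < p.gap j by omega), ?_⟩, rfl⟩
    exact p.ed_add_ed_eq_zero_iff.2 hsum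

theorem gap_one_le {x : ℤ} (hx : x ∉ p.beads) : p.gap 1 ≤ x := by
  obtain ⟨j, rfl⟩ := p.exists_gap_eq hx
  exact p.gap_strictMono.monotone one_le

theorem eventually_degd_eq_card_filter (δ : ℤ) :
    ∀ᶠ y in atTop, degd δ p =
      #{x ∈ Ioo (-δ - y) y | -δ < 2 * x ∧ x ∉ p.beads ∧ -δ - x ∉ p.beads} := by
  filter_upwards [eventually_gt_atTop (-δ - p.gap 1)] with y hy
  rw [degd_eq_ncard, ← Set.ncard_coe_finset]
  congr 1
  ext x
  simp only [coe_filter, Set.mem_ofPred_eq, iff_and_self, mem_Ioo]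
  rintro ⟨hx, -, hgap⟩
  have := p.gap_one_le hgap
  omega

theorem degd_eq_zero_iff (δ : ℤ) :
    degd δ p = 0 ↔ ¬ ∃ x, -δ < 2 * x ∧ x ∉ p.beads ∧ -δ - x ∉ p.beads := by
  have hfin : {x : ℤ | -δ < 2 * x ∧ x ∉ p.beads ∧ -δ - x ∉ p.beads}.Finite :=
    (Set.finite_Icc (p.gap 1) (-δ - p.gap 1)).subset fun x ⟨_, hx, hx'⟩ ↦
      ⟨p.gap_one_le hx, by have := p.gap_one_le hx'; omega⟩
  rw [degd_eq_ncard, Set.ncard_eq_zero hfin, ← Set.not_nonempty_iff_eq_empty]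
  rfl

theorem eventually_card_filter_mem_pair (δ : ℤ) :
    ∀ᶠ y in atTop, (#{x ∈ Ioo (-δ - y) y | x ∈ p.beads ∧ -δ - x ∈ p.beads} : ℤ) =
      2 * degd δ p + #{x ∈ Ioo (-δ - y) y | 2 * x = -δ ∧ x ∉ p.beads} + δ - 1 := by
  filter_upwards [p.eventually_excess_beads_Ioo (-δ), p.eventually_degd_eq_card_filter δ]
    with y hexc hdeg
  rw [excess_eq_card_sub_card_of_involutive (involutive_sub_left _) (mapsTo_sub_left_Ioo _ y),
    card_filter_notMem_pair, ← hdeg] at hexc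
  push_cast at hexc
  omega

theorem degd_eq_degd_empty_iff_of_pos {δ : ℤ} (hδ : 0 < δ) :
    degd δ p = degd δ empty ↔ ¬ ∃ x, -δ < 2 * x ∧ x ∉ p.beads ∧ -δ - x ∉ p.beads := by
  have hempty : degd δ empty = 0 := by
    rw [degd_eq_zero_iff]
    rintro ⟨x, -, hx, hx'⟩
    rw [mem_beads_empty] at hx hx'
    omega
  rw [hempty, degd_eq_zero_iff]

theorem eventually_two_mul_degd_empty_of_nonpos {δ : ℤ} (hδ : δ ≤ 0) :
    ∀ᶠ y in atTop, (2 * degd δ empty + #{x ∈ Ioo (-δ - y) y | 2 * x = -δ} : ℤ) = 1 - δ := by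
  filter_upwards [empty.eventually_card_filter_mem_pair δ] with y hy
  have hpairs : #{x ∈ Ioo (-δ - y) y | x ∈ empty.beads ∧ -δ - x ∈ empty.beads} = 0 := by
    rw [card_eq_zero, filter_eq_empty_iff]
    rintro x - ⟨hx, hx'⟩
    rw [mem_beads_empty] at hx hx'
    omega
  have hmid : #{x ∈ Ioo (-δ - y) y | 2 * x = -δ ∧ x ∉ empty.beads} =
      #{x ∈ Ioo (-δ - y) y | 2 * x = -δ} := by
    refine congr_arg card (filter_congr fun x _ ↦ and_iff_left_of_imp fun hx ↦ ?_)
    rw [mem_beads_empty]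
    omega
  rw [hpairs, hmid] at hy
  omega

theorem degd_eq_degd_empty_iff_of_nonpos {δ : ℤ} (hδ : δ ≤ 0) :
    degd δ p = degd δ empty ↔ ¬ ∃ x ∈ p.beads, -δ - x ∈ p.beads := by
  have hcount := (p.eventually_card_filter_mem_pair δ).and
    (eventually_two_mul_degd_empty_of_nonpos hδ)
  constructor
  · rintro hdeg ⟨x, hx, hx'⟩
    obtain ⟨y, ⟨hp, hempty⟩, hxy, hxy'⟩ := (hcount.and
      ((eventually_gt_atTop x).and (eventually_gt_atTop (-δ - x)))).exists
    have hpos : 0 < #{x ∈ Ioo (-δ - y) y | x ∈ p.beads ∧ -δ - x ∈ p.beads} :=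
      card_pos.2 ⟨x, mem_filter.2 ⟨mem_Ioo.2 ⟨by omega, hxy⟩, hx, hx'⟩⟩
    have hmid : #{x ∈ Ioo (-δ - y) y | 2 * x = -δ ∧ x ∉ p.beads} ≤
        #{x ∈ Ioo (-δ - y) y | 2 * x = -δ} :=
      card_le_card (monotone_filter_right _ fun _ _ ↦ And.left)
    omega
  · intro hno
    obtain ⟨y, hp, hempty⟩ := hcount.exists
    have hzero : #{x ∈ Ioo (-δ - y) y | x ∈ p.beads ∧ -δ - x ∈ p.beads} = 0 :=
      card_eq_zero.2 (filter_eq_empty_iff.2 fun x _ hx ↦ hno ⟨x, hx⟩)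
    have hmid : #{x ∈ Ioo (-δ - y) y | 2 * x = -δ ∧ x ∉ p.beads} =
        #{x ∈ Ioo (-δ - y) y | 2 * x = -δ} := by
      refine congr_arg card (filter_congr fun x _ ↦ and_iff_left_of_imp fun hx hxp ↦ ?_)
      exact hno ⟨x, hxp, by rwa [show -δ - x = x by omega]⟩
    omega

end Degree

end Ptn

/-- P_λ(δ) ≠ 0 iff λ is δ-regular, i.e. deg_δ(λ) = deg_δ(∅). -/
theorem stmt11 (δ : ℤ) (p : Ptn) :
    (king p).eval (δ : ℚ) ≠ 0 ↔ degd δ p = degd δ Ptn.empty := by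
  rw [ne_eq, Ptn.king_eval_eq_zero_iff_hasVanishingBox]
  rcases lt_or_ge 0 δ with hδ | hδ
  · rw [p.degd_eq_degd_empty_iff_of_pos hδ, Ptn.hasVanishingBox_iff_of_neg (neg_lt_zero.2 hδ)]
  · rw [p.degd_eq_degd_empty_iff_of_nonpos hδ, Ptn.hasVanishingBox_iff_of_nonneg (neg_nonneg.2 hδ)]
end

section
/- Let λ be a partition with a box addable at position (k,i), and set μ := λ ∪ (k,i). Suppose a box is addable to μ at position (l,j) with l ≠ k, and set ν := μ ∪ (l,j). If i ≠ j then (ν_l − l) − (μ_k − k) = (λ^T_i − i) − (λ^T_j − j); equivalently, for every δ ∈ ℤ, (ν_l − l) − (μ_k − k) = e_δ(λ)_i − e_δ(λ)_j. If i = j then l = k + 1 and (ν_l − l) − (μ_k − k) = −1. (This is the geometric evaluation of the Brauer diamond ◊(S,S) for the up-up walk S = (λ, μ, ν): for i ≠ j it equals ⟨e_δ(λ), ε_i − ε_j⟩.) -/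
open Polynomial

/-!
The content `i - k` of a box added at `(k, i)` can be read off along its row or along its column,
as `λ_k + 1 = i` and `λ^T_i + 1 = k`. Reading the contents of both boxes of the walk along columns,
their difference is `(λ^T_i - i) - (μ^T_j - j)`. Adding the first box changes `λ^T` only in column
`i`, so `μ^T_j = λ^T_j` when `i ≠ j`, whereas `μ^T_j = λ^T_j + 1` when `i = j`.
-/

theorem Ptn.transpose_add_one_of_forall_le_iff_lt {p : Ptn} {i k : ℕ+}
    (h : ∀ t : ℕ+, (i : ℕ) ≤ p.toFun t ↔ t < k) : p.transpose i + 1 = (k : ℕ) := by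
  have hset : {t : ℕ+ | (i : ℕ) ≤ p.toFun t} = (Finset.Ico 1 k : Finset ℕ+) := by
    ext t
    simp [h]
  rw [Ptn.transpose, hset, Set.ncard_coe_finset, PNat.card_Ico, PNat.one_coe,
    Nat.sub_add_cancel k.pos]

namespace AddBoxAt

variable {p q : Ptn} {k i : ℕ+}

theorem transpose_add_one (h : AddBoxAt p q k) (hi : q.toFun k = i) :
    p.transpose i + 1 = (k : ℕ) := by
  refine Ptn.transpose_add_one_of_forall_le_iff_lt fun t => ⟨fun ht => ?_, fun ht => ?_⟩
  · by_contra! hkt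
    have := p.antitone' k t hkt
    have := h.1
    omega
  · calc (i : ℕ) = q.toFun k := hi.symm
      _ ≤ q.toFun t := q.antitone' t k ht.le
      _ = p.toFun t := h.2 t ht.ne

theorem transpose_of_eq (h : AddBoxAt p q k) (hi : q.toFun k = i) :
    q.transpose i = p.transpose i + 1 := by
  have hq : q.transpose i + 1 = ((k + 1 : ℕ+) : ℕ) := by
    refine Ptn.transpose_add_one_of_forall_le_iff_lt fun t => ⟨fun ht => ?_, fun ht => ?_⟩
    · by_contra! hkt
      have hlt : k < t := PNat.add_one_le_iff.mp hkt
      have := p.antitone' k t hlt.le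
      have := h.1
      have := h.2 t hlt.ne'
      omega
    · exact hi ▸ q.antitone' t k (PNat.lt_add_one_iff.mp ht)
  rw [h.transpose_add_one hi]
  exact Nat.succ_injective hq

theorem transpose_of_ne (h : AddBoxAt p q k) (hne : q.toFun k ≠ i) :
    q.transpose i = p.transpose i := by
  have hle (t : ℕ+) : (i : ℕ) ≤ q.toFun t ↔ (i : ℕ) ≤ p.toFun t := by
    obtain rfl | htk := eq_or_ne t k
    · have := h.1
      omega
    · rw [h.2 t htk]
  simp only [Ptn.transpose, hle]

theorem toFun_sub_eq_sub_transpose (h : AddBoxAt p q k) (hi : q.toFun k = i) :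
    (q.toFun k : ℤ) - (k : ℕ) = (i : ℕ) - p.transpose i - 1 := by
  have := h.transpose_add_one hi
  omega

end AddBoxAt

theorem ed_sub_ed (δ : ℤ) (p : Ptn) (i j : ℕ+) :
    ed δ p i - ed δ p j =
      ((((p.transpose i : ℤ) - (i : ℕ)) - ((p.transpose j : ℤ) - (j : ℕ)) : ℤ) : ℚ) := by
  simp only [ed]
  push_cast
  ring

theorem stmt13_general (p μ ν : Ptn) (k i l j : ℕ+)
    (hμ : AddBoxAt p μ k) (hi : μ.toFun k = i)
    (hν : AddBoxAt μ ν l) (hj : ν.toFun l = j) :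
    (i ≠ j →
      (((ν.toFun l : ℤ) - ((l : ℕ) : ℤ)) - ((μ.toFun k : ℤ) - ((k : ℕ) : ℤ))
          = ((p.transpose i : ℤ) - ((i : ℕ) : ℤ)) - ((p.transpose j : ℤ) - ((j : ℕ) : ℤ))) ∧
      ∀ δ : ℤ,
        ((((ν.toFun l : ℤ) - ((l : ℕ) : ℤ)) - ((μ.toFun k : ℤ) - ((k : ℕ) : ℤ))) : ℚ)
          = ed δ p i - ed δ p j) ∧
    (i = j → l = k + 1 ∧
      ((ν.toFun l : ℤ) - ((l : ℕ) : ℤ)) - ((μ.toFun k : ℤ) - ((k : ℕ) : ℤ)) = -1) := by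
  have hcontent : ((ν.toFun l : ℤ) - ((l : ℕ) : ℤ)) - ((μ.toFun k : ℤ) - ((k : ℕ) : ℤ)) =
      ((p.transpose i : ℤ) - (i : ℕ)) - ((μ.transpose j : ℤ) - (j : ℕ)) := by
    rw [hν.toFun_sub_eq_sub_transpose hj, hμ.toFun_sub_eq_sub_transpose hi]
    ring
  refine ⟨fun hij => ?_, ?_⟩
  · have hμj : μ.toFun k ≠ j := fun h => hij (PNat.eq (hi.symm.trans h))
    rw [hμ.transpose_of_ne hμj] at hcontent
    refine ⟨hcontent, fun δ => ?_⟩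
    rw [ed_sub_ed]
    exact_mod_cast hcontent
  · rintro rfl
    have hμi : μ.transpose i = p.transpose i + 1 := hμ.transpose_of_eq hi
    refine ⟨PNat.eq ?_, ?_⟩
    · rw [← hν.transpose_add_one hj, hμi, hμ.transpose_add_one hi, PNat.add_coe, PNat.one_coe]
    · rw [hcontent, hμi]
      push_cast
      ring

/-- up-up Brauer diamond. μ = λ ∪ (k,i), ν = μ ∪ (l,j) with l ≠ k.
If i ≠ j then (ν_l − l) − (μ_k − k) = (λ^T_i − i) − (λ^T_j − j) = e_δ(λ)_i − e_δ(λ)_j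
for every δ; if i = j then l = k + 1 and the quantity equals −1. -/
theorem stmt13 (p μ ν : Ptn) (k i l j : ℕ+)
    (h1 : AddableAt p k i) (hμ : AddBoxAt p μ k)
    (hlk : l ≠ k)
    (h2 : AddableAt μ l j) (hν : AddBoxAt μ ν l) :
    (i ≠ j →
      (((ν.toFun l : ℤ) - ((l : ℕ) : ℤ)) - ((μ.toFun k : ℤ) - ((k : ℕ) : ℤ))
          = ((p.transpose i : ℤ) - ((i : ℕ) : ℤ)) - ((p.transpose j : ℤ) - ((j : ℕ) : ℤ))) ∧
      ∀ δ : ℤ,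
        ((((ν.toFun l : ℤ) - ((l : ℕ) : ℤ)) - ((μ.toFun k : ℤ) - ((k : ℕ) : ℤ))) : ℚ)
          = ed δ p i - ed δ p j) ∧
    (i = j → l = k + 1 ∧
      ((ν.toFun l : ℤ) - ((l : ℕ) : ℤ)) - ((μ.toFun k : ℤ) - ((k : ℕ) : ℤ)) = -1) :=
  stmt13_general p μ ν k i l j hμ (hμ.1.trans h1.1) hν (hν.1.trans h2.1)
end

section
/- Let δ ∈ ℤ, let s ∈ {1, −1}, and let λ, μ, ν be partitions and i ≠ j positive integers such that μ^T equals λ^T with its j-th part decreased by s and ν^T equals μ^T with its i-th part increased by s (equivalently, e_δ(μ) = e_δ(λ) − s·ε_j and e_δ(ν) = e_δ(λ) + s·ε_i − s·ε_j). If deg_δ(λ) = deg_δ(μ) = deg_δ(ν), then e_δ(λ)_i + e_δ(λ)_j ≠ 0. -/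
open Polynomial

/-!
View the walk from its middle term `y = e_δ(μ)`: then `e_δ(λ) = y + s·ε_j` and
`e_δ(ν) = y + s·ε_i`. If `e_δ(λ)_i + e_δ(λ)_j = 0`, then `-y_j = y_i + s` is the `i`-th entry of
`e_δ(ν)`, so by strict monotonicity of `e_δ(ν)` it occurs nowhere else in that sequence, and hence
nowhere in `y` (whose own `i`-th entry differs from it by `s ≠ 0`). Thus `j` lies in no singular
pair of `μ`. Since the remaining entries of `e_δ(λ)` and `y` agree, passing from `λ` to `μ` destroys
the pair `{i, j}` and creates none, so the (finite) degree of singularity drops.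
-/

open Filter

section SingularPairs

variable {ι G : Type*}

/-- The singular pairs of a sequence: the pairs of positions `a < b` whose entries are opposite.
For `x = ed δ p` their number is, by definition, `degd δ p`. -/
def singularPairs [LT ι] [AddZeroClass G] (x : ι → G) : Set (ι × ι) :=
  {q | q.1 < q.2 ∧ x q.1 + x q.2 = 0}

theorem finite_singularPairs [LinearOrder ι] [LocallyFiniteOrderBot ι] [OrderBot ι]
    [AddCommGroup G] [PartialOrder G] [IsOrderedAddMonoid G] [NoMinOrder G] {x : ι → G}
    (hx : Antitone x) (hlim : Tendsto x atTop atBot) : (singularPairs x).Finite := by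
  obtain ⟨N, hN⟩ := eventually_atTop.1 (hlim.eventually_lt_atBot (-x ⊥))
  refine ((Set.finite_Iio N).prod (Set.finite_Iio N)).subset ?_
  rintro ⟨a, b⟩ ⟨hab, hsum⟩
  have hb : -x ⊥ ≤ x b := by
    rw [← neg_eq_of_add_eq_zero_right hsum]
    exact neg_le_neg (hx bot_le)
  have hbN : b < N := lt_of_not_ge fun h => (hN b h).not_ge hb
  exact ⟨hab.trans hbN, hbN⟩

theorem add_ne_zero_of_injective_add_single [DecidableEq ι] [AddGroup G] {y : ι → G} {c : G}
    {i j : ι} (hc : c ≠ 0) (hinj : Function.Injective (y + Pi.single i c))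
    (hsum : y i + c + y j = 0) (t : ι) : y t + y j ≠ 0 := by
  intro ht
  have hval : y t = y i + c := add_right_cancel (ht.trans hsum.symm)
  rcases eq_or_ne t i with rfl | hti
  · exact hc (left_eq_add.1 hval)
  · exact hti (hinj (by simp [hti, hval]))

theorem singularPairs_ssubset_add_single [LinearOrder ι] [AddCommGroup G] {y : ι → G} {c : G}
    {i j : ι} (hij : i ≠ j) (hy : ∀ t, y t + y j ≠ 0) (hsum : y i + c + y j = 0) :
    singularPairs y ⊂ singularPairs (y + Pi.single j c) := by
  refine Set.ssubset_iff_exists.2 ⟨?_, ?_⟩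
  · rintro ⟨a, b⟩ ⟨hab, h⟩
    have ha : a ≠ j := by
      rintro rfl
      exact hy b (by rwa [add_comm])
    have hb : b ≠ j := by
      rintro rfl
      exact hy a h
    exact ⟨hab, by simpa [ha, hb] using h⟩
  · rcases hij.lt_or_gt with hlt | hgt
    · refine ⟨(i, j), ⟨hlt, ?_⟩, fun h => hy i h.2⟩
      simpa [hij, add_assoc, add_comm, add_left_comm] using hsum
    · refine ⟨(j, i), ⟨hgt, ?_⟩, fun h => hy i ((add_comm _ _).trans h.2)⟩
      simpa [hij, add_assoc, add_comm, add_left_comm] using hsum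

end SingularPairs

theorem Ptn.antitone_transpose (p : Ptn) : Antitone p.transpose := by
  intro a b hab
  obtain ⟨N, hN⟩ := p.finite_support'
  have hfin : {k : ℕ+ | (a : ℕ) ≤ p.toFun k}.Finite := by
    refine (Set.finite_Iio N).subset fun k hk => Set.mem_Iio.2 (lt_of_not_ge fun hNk => ?_)
    exact a.pos.not_ge (hk.trans (hN k hNk).le)
  exact Set.ncard_le_ncard (fun k hk => ((PNat.coe_le_coe a b).2 hab).trans hk) hfin

theorem strictAnti_ed (δ : ℤ) (p : Ptn) : StrictAnti (ed δ p) := by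
  intro a b hab
  have htr : (p.transpose b : ℚ) ≤ p.transpose a := mod_cast p.antitone_transpose hab.le
  have hab' : ((a : ℕ) : ℚ) < (b : ℕ) := mod_cast hab
  unfold ed
  linarith

theorem tendsto_ed_atBot (δ : ℤ) (p : Ptn) : Tendsto (ed δ p) atTop atBot := by
  have hle (i : ℕ+) : ed δ p i ≤ (p.transpose 1 - (δ : ℚ) / 2 + 1) + -((i : ℕ) : ℚ) := by
    have htr : (p.transpose i : ℚ) ≤ p.transpose 1 := mod_cast p.antitone_transpose one_le
    unfold ed
    linarith
  refine tendsto_atBot_mono hle (tendsto_atBot_add_const_left _ _ ?_)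
  exact tendsto_neg_atTop_atBot.comp
    (tendsto_natCast_atTop_atTop.comp tendsto_PNat_val_atTop_atTop)

theorem finite_singularPairs_ed (δ : ℤ) (p : Ptn) : (singularPairs (ed δ p)).Finite :=
  finite_singularPairs (strictAnti_ed δ p).antitone (tendsto_ed_atBot δ p)

theorem ed_eq_add_single (δ : ℤ) {s : ℤ} {p q : Ptn} {k : ℕ+}
    (hk : (q.transpose k : ℤ) = p.transpose k + s)
    (hne : ∀ t, t ≠ k → q.transpose t = p.transpose t) :
    ed δ q = ed δ p + Pi.single k (s : ℚ) := by
  ext t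
  rcases eq_or_ne t k with rfl | htk
  · have hk' : (q.transpose t : ℚ) = p.transpose t + s := mod_cast hk
    simp only [ed, Pi.add_apply, Pi.single_eq_same, hk']
    ring
  · simp only [ed, Pi.add_apply, Pi.single_eq_of_ne htk, hne t htk, add_zero]

theorem stmt18_general {δ s : ℤ} (hs : s ≠ 0) {lam mu nu : Ptn} {i j : ℕ+} (hij : i ≠ j)
    (hmu : (mu.transpose j : ℤ) = (lam.transpose j : ℤ) - s ∧
      ∀ t : ℕ+, t ≠ j → mu.transpose t = lam.transpose t)
    (hnu : (nu.transpose i : ℤ) = (mu.transpose i : ℤ) + s ∧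
      ∀ t : ℕ+, t ≠ i → nu.transpose t = mu.transpose t)
    (hdeg : degd δ lam ≤ degd δ mu) :
    ed δ lam i + ed δ lam j ≠ 0 := by
  intro hzero
  have hlam : ed δ lam = ed δ mu + Pi.single j (s : ℚ) :=
    ed_eq_add_single δ (eq_sub_iff_add_eq.1 hmu.1).symm fun t ht => (hmu.2 t ht).symm
  have hnu_inj : Function.Injective (ed δ mu + Pi.single i (s : ℚ)) :=
    ed_eq_add_single δ hnu.1 hnu.2 ▸ (strictAnti_ed δ nu).injective
  have hsum : ed δ mu i + s + ed δ mu j = 0 := by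
    simpa [hlam, hij, add_assoc, add_comm, add_left_comm] using hzero
  have hj : ∀ t, ed δ mu t + ed δ mu j ≠ 0 :=
    add_ne_zero_of_injective_add_single (Int.cast_ne_zero.2 hs) hnu_inj hsum
  have hssub : singularPairs (ed δ mu) ⊂ singularPairs (ed δ lam) :=
    hlam ▸ singularPairs_ssubset_add_single hij hj hsum
  exact (Set.ncard_lt_ncard hssub (finite_singularPairs_ed δ lam)).not_ge hdeg

/-- for the down-up walk λ → μ → ν (e_δ(μ) = e_δ(λ) − s·ε_j,
e_δ(ν) = e_δ(λ) + s·ε_i − s·ε_j, s = ±1, i ≠ j), if λ, μ, ν all have the same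
δ-degree of singularity then e_δ(λ)_i + e_δ(λ)_j ≠ 0. -/
theorem stmt18 (δ s : ℤ) (hs : s = 1 ∨ s = -1)
    (lam mu nu : Ptn) (i j : ℕ+) (hij : i ≠ j)
    (hmu : (mu.transpose j : ℤ) = (lam.transpose j : ℤ) - s ∧
      ∀ t : ℕ+, t ≠ j → mu.transpose t = lam.transpose t)
    (hnu : (nu.transpose i : ℤ) = (mu.transpose i : ℤ) + s ∧
      ∀ t : ℕ+, t ≠ i → nu.transpose t = mu.transpose t)
    (hdeg : degd δ lam = degd δ mu ∧ degd δ mu = degd δ nu) :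
    ed δ lam i + ed δ lam j ≠ 0 := by
  exact stmt18_general (by rcases hs with rfl | rfl <;> decide) hij hmu hnu hdeg.1.le
end
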